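/- arXiv:2604.12244 — 2 statements merged into one kernel-verified Lean document; each statement's English description precedes it below -/
import Mathlib

section
/- Let m_ρ: 𝔻₁ → 𝔻₁ be the map z ↦ ρz for 0 < ρ < 1. Then for all ξ, η in 𝔻₁, d_hyp(m_ρ(ξ), m_ρ(η)) ≤ ρ · d_hyp(ξ, η). -/
open Complex

/-- Inverse hyperbolic tangent. -/
noncomputable def artanh (x : ℝ) : ℝ := (1 / 2) * Real.log ((1 + x) / (1 - x))

/-- The Poincaré hyperbolic distance on the open unit disk. -/
noncomputable def dHyp (z w : ℂ) : ℝ :=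
  2 * artanh ‖(z - w) / (1 - (starRingEnd ℂ) w * z)‖

/-!
Half the hyperbolic distance between `ρ ξ` and `ρ η` is `arsinh (g r)` with `r = ‖ρ‖` and
`g r = r c / √((1 - r² a²) (1 - r² b²))`, where `a = ‖ξ‖`, `b = ‖η‖`, `c = ‖ξ - η‖`. The triangle
inequality `c ≤ a + b` makes `√(1 + g²)` at most the logarithmic derivative `r g' / g`, so that
`arsinh g ≤ g ≤ r (arsinh ∘ g)'`, and `r ↦ arsinh (g r) / r` is increasing on `(0, 1]`. Comparing
its values at `‖ρ‖` and `1` gives the contraction.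
-/

lemma monotoneOn_div_id_of_le_mul_deriv {s : Set ℝ} (hs : Convex ℝ s) (hpos : s ⊆ Set.Ioi 0)
    {f f' : ℝ → ℝ} (hf : ∀ x ∈ s, HasDerivAt f (f' x) x) (hle : ∀ x ∈ s, f x ≤ x * f' x) :
    MonotoneOn (fun x => f x / x) s := by
  have hderiv (x : ℝ) (hx : x ∈ s) :
      HasDerivAt (fun x => f x / x) ((f' x * x - f x * 1) / x ^ 2) x :=
    (hf x hx).div (hasDerivAt_id x) (hpos hx).ne'
  refine monotoneOn_of_hasDerivWithinAt_nonneg hs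
    (fun x hx => (hderiv x hx).continuousAt.continuousWithinAt)
    (fun x hx => (hderiv x (interior_subset hx)).hasDerivWithinAt) fun x hx => ?_
  have := hle x (interior_subset hx)
  exact div_nonneg (by linarith) (sq_nonneg x)

lemma arsinh_le_self {x : ℝ} (hx : 0 ≤ x) : Real.arsinh x ≤ x := by
  rw [← Real.sinh_le_sinh, Real.sinh_arsinh]
  exact Real.self_le_sinh_iff.2 hx

lemma artanh_tanh (x : ℝ) : artanh (Real.tanh x) = x := by
  rw [artanh, ← Real.artanh_eq_half_log ⟨(Real.neg_one_lt_tanh x).le, (Real.tanh_lt_one x).le⟩,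
    Real.artanh_tanh]

lemma sq_norm_one_sub_conj_mul (z w : ℂ) :
    ‖1 - (starRingEnd ℂ) w * z‖ ^ 2 = (1 - ‖z‖ ^ 2) * (1 - ‖w‖ ^ 2) + ‖z - w‖ ^ 2 := by
  simp only [Complex.sq_norm, normSq_apply, sub_re, sub_im, mul_re, mul_im, conj_re, conj_im,
    one_re, one_im]
  ring

/-- The hyperbolic sine of half the hyperbolic distance between two points of the unit disk, as a
function of their norms `a`, `b` and their Euclidean distance `c`. -/
noncomputable def sinhHalfDist (a b c : ℝ) : ℝ := c / √((1 - a ^ 2) * (1 - b ^ 2))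

lemma one_sub_sq_mul_one_sub_sq_pos {a b : ℝ} (ha : |a| < 1) (hb : |b| < 1) :
    0 < (1 - a ^ 2) * (1 - b ^ 2) :=
  mul_pos (sub_pos.2 ((sq_lt_one_iff_abs_lt_one a).2 ha))
    (sub_pos.2 ((sq_lt_one_iff_abs_lt_one b).2 hb))

namespace sinhHalfDist

variable {a b c r : ℝ}

lemma nonneg (hc : 0 ≤ c) : 0 ≤ sinhHalfDist a b c := div_nonneg hc (Real.sqrt_nonneg _)

lemma mul_right : sinhHalfDist a b (r * c) = r * sinhHalfDist a b c := mul_div_assoc ..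

lemma one_add_sq (hu : 0 < (1 - a ^ 2) * (1 - b ^ 2)) :
    1 + sinhHalfDist a b c ^ 2
      = ((1 - a ^ 2) * (1 - b ^ 2) + c ^ 2) / ((1 - a ^ 2) * (1 - b ^ 2)) := by
  rw [sinhHalfDist, div_pow, Real.sq_sqrt hu.le, one_add_div hu.ne']

lemma tanh_arsinh (hu : 0 < (1 - a ^ 2) * (1 - b ^ 2)) :
    Real.tanh (Real.arsinh (sinhHalfDist a b c))
      = c / √((1 - a ^ 2) * (1 - b ^ 2) + c ^ 2) := by
  rw [Real.tanh_arsinh, one_add_sq hu, Real.sqrt_div' _ hu.le, sinhHalfDist,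
    div_div_div_cancel_right₀ (Real.sqrt_pos.2 hu).ne']

lemma sqrt_one_add_sq_le (ha : |a| < 1) (hb : |b| < 1) (hc : c ^ 2 ≤ (a + b) ^ 2) :
    √(1 + sinhHalfDist a b c ^ 2)
      ≤ (1 - a ^ 2 * b ^ 2) / ((1 - a ^ 2) * (1 - b ^ 2)) := by
  have hu := one_sub_sq_mul_one_sub_sq_pos ha hb
  have hab : a ^ 2 * b ^ 2 ≤ 1 :=
    mul_le_one₀ ((sq_le_one_iff_abs_le_one a).2 ha.le) (sq_nonneg b)
      ((sq_le_one_iff_abs_le_one b).2 hb.le)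
  have hadd : (1 - a ^ 2) * (1 - b ^ 2) + c ^ 2 ≤ (1 + a * b) ^ 2 := by linarith
  have hsub : (1 - a ^ 2) * (1 - b ^ 2) ≤ (1 - a * b) ^ 2 := by linarith [sq_nonneg (a - b)]
  rw [one_add_sq hu]
  generalize (1 - a ^ 2) * (1 - b ^ 2) = u at *
  refine Real.sqrt_le_iff.2 ⟨div_nonneg (sub_nonneg.2 hab) hu.le, ?_⟩
  calc (u + c ^ 2) / u = (u + c ^ 2) * u / u ^ 2 := by field_simp
    _ ≤ (1 + a * b) ^ 2 * (1 - a * b) ^ 2 / u ^ 2 := by gcongr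
    _ = ((1 - a ^ 2 * b ^ 2) / u) ^ 2 := by ring

lemma hasDerivAt_scale (hu : 0 < (1 - (r * a) ^ 2) * (1 - (r * b) ^ 2)) :
    HasDerivAt (fun t : ℝ => sinhHalfDist (t * a) (t * b) (t * c))
      (sinhHalfDist (r * a) (r * b) c * ((1 - (r * a) ^ 2 * (r * b) ^ 2)
        / ((1 - (r * a) ^ 2) * (1 - (r * b) ^ 2)))) r := by
  have hfactor (k : ℝ) :
      HasDerivAt (fun t : ℝ => 1 - (t * k) ^ 2) (-(2 * (r * k) * k)) r := by
    simpa using (((hasDerivAt_id r).mul_const k).pow 2).const_sub 1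
  have hquot := ((hasDerivAt_id r).mul_const c).div
    (((hfactor a).mul (hfactor b)).sqrt hu.ne') (Real.sqrt_pos.2 hu).ne'
  refine hquot.congr_deriv ?_
  have hsq := Real.sq_sqrt hu.le
  have hsqrt := Real.sqrt_pos.2 hu
  simp only [Pi.mul_apply, id, sinhHalfDist]
  set q := √((1 - (r * a) ^ 2) * (1 - (r * b) ^ 2))
  -- With `q ^ 2` in place of the radicand, both sides are rational in `q`.
  rw [← hsq]
  field_simp
  rw [hsq]
  ring

lemma monotoneOn_arsinh_scale_div (ha : |a| < 1) (hb : |b| < 1) (hc : 0 ≤ c)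
    (hcab : c ≤ a + b) :
    MonotoneOn (fun r : ℝ => Real.arsinh (sinhHalfDist (r * a) (r * b) (r * c)) / r)
      (Set.Ioc 0 1) := by
  have habs {k r : ℝ} (hk : |k| < 1) (hr : r ∈ Set.Ioc (0 : ℝ) 1) : |r * k| < 1 := by
    rw [abs_mul, abs_of_pos hr.1]
    exact (mul_le_of_le_one_left (abs_nonneg k) hr.2).trans_lt hk
  refine monotoneOn_div_id_of_le_mul_deriv (convex_Ioc 0 1) (fun r hr => hr.1)
    (fun r hr => (hasDerivAt_scale
      (one_sub_sq_mul_one_sub_sq_pos (habs ha hr) (habs hb hr))).arsinh) fun r hr => ?_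
  have hscaled : (r * c) ^ 2 ≤ (r * a + r * b) ^ 2 := by
    rw [← mul_add, mul_pow, mul_pow]
    gcongr
  have hlog := sqrt_one_add_sq_le (habs ha hr) (habs hb hr) hscaled
  set K := (1 - (r * a) ^ 2 * (r * b) ^ 2) / ((1 - (r * a) ^ 2) * (1 - (r * b) ^ 2))
  have hg : 0 ≤ sinhHalfDist (r * a) (r * b) (r * c) := nonneg (mul_nonneg hr.1.le hc)
  have hg_eq : sinhHalfDist (r * a) (r * b) (r * c) = r * sinhHalfDist (r * a) (r * b) c :=
    mul_right
  set g := sinhHalfDist (r * a) (r * b) (r * c)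
  have hsqrt : 0 < √(1 + g ^ 2) := by positivity
  calc Real.arsinh g ≤ g := arsinh_le_self hg
    _ ≤ g * (K / √(1 + g ^ 2)) := le_mul_of_one_le_right hg ((one_le_div hsqrt).2 hlog)
    _ = r * ((√(1 + g ^ 2))⁻¹ • (sinhHalfDist (r * a) (r * b) c * K)) := by
      rw [hg_eq, smul_eq_mul]
      ring

end sinhHalfDist

lemma dHyp_eq_two_mul_arsinh {z w : ℂ} (hz : ‖z‖ < 1) (hw : ‖w‖ < 1) :
    dHyp z w = 2 * Real.arsinh (sinhHalfDist ‖z‖ ‖w‖ ‖z - w‖) := by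
  have hu := one_sub_sq_mul_one_sub_sq_pos ((abs_norm z).trans_lt hz) ((abs_norm w).trans_lt hw)
  rw [dHyp, norm_div, ← Real.sqrt_sq (norm_nonneg (1 - _)), sq_norm_one_sub_conj_mul,
    ← sinhHalfDist.tanh_arsinh hu, artanh_tanh]

theorem scaling_hyperbolic_contraction_general {ρ ξ η : ℂ} (hρ : ‖ρ‖ ≤ 1) (hξ : ‖ξ‖ < 1)
    (hη : ‖η‖ < 1) : dHyp (ρ * ξ) (ρ * η) ≤ ‖ρ‖ * dHyp ξ η := by
  rcases eq_or_ne ρ 0 with rfl | hρ0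
  · simp [dHyp, artanh]
  have hρ_pos : 0 < ‖ρ‖ := norm_pos_iff.2 hρ0
  have hmem {z : ℂ} (hz : ‖z‖ < 1) : ‖ρ * z‖ < 1 := by
    rw [norm_mul]
    exact (mul_le_of_le_one_left (norm_nonneg z) hρ).trans_lt hz
  have hmono := sinhHalfDist.monotoneOn_arsinh_scale_div ((abs_norm ξ).trans_lt hξ)
    ((abs_norm η).trans_lt hη) (norm_nonneg (ξ - η)) (norm_sub_le ξ η)
    ⟨hρ_pos, hρ⟩ ⟨one_pos, le_rfl⟩ hρ
  simp only [one_mul, div_one, div_le_iff₀ hρ_pos] at hmono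
  rw [dHyp_eq_two_mul_arsinh (hmem hξ) (hmem hη), dHyp_eq_two_mul_arsinh hξ hη, ← mul_sub,
    norm_mul, norm_mul, norm_mul]
  linarith

/-- The map `m_ρ : z ↦ ρ z` on the unit disk contracts the hyperbolic
distance by the factor `ρ`, for `0 < ρ < 1`. -/
theorem scaling_hyperbolic_contraction
    (ρ : ℝ) (hρ0 : 0 < ρ) (hρ1 : ρ < 1) :
    ∀ ξ η : ℂ, ‖ξ‖ < 1 → ‖η‖ < 1 →
      dHyp ((ρ : ℂ) * ξ) ((ρ : ℂ) * η) ≤ ρ * dHyp ξ η := by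
  intro ξ η hξ hη
  have hnorm : ‖(ρ : ℂ)‖ = ρ := by rw [norm_real, Real.norm_of_nonneg hρ0.le]
  simpa only [hnorm] using scaling_hyperbolic_contraction_general (hnorm.trans_le hρ1.le) hξ hη
end

section
/- Let Q be an irreducible row-stochastic matrix indexed by a finite set C, with unique stationary probability vector (π_r)_{r∈C} (so π_r > 0, ∑ π_r = 1, and ∑_r π_r Q_{r,r'} = π_{r'}). Let 0 < ρ < 1 and let (f_r)_{r∈C} be maps on (-1,1) each of which is a ρ-Lipschitz contraction for the hyperbolic metric d_hyp. Define the Markov operator ℋ on the product space 𝒫₁^C of |C|-tuples of probability measures on (-1,1) with finite first hyperbolic moment by (ℋη)_{r'} = ∑_{r∈C} (π_r Q_{r,r'}/π_{r'}) (f_r)_* η_r. Then ℋ maps 𝒫₁^C into itself and is a ρ-contraction with respect to the metric 𝒲(η, ζ) = ∑_{r∈C} π_r W₁(η_r, ζ_r), where W₁ is the Wasserstein-1 metric for d_hyp. In particular, ℋ has a unique fixed point in 𝒫₁^C. -/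
open MeasureTheory

/-- The hyperbolic distance on `(-1,1)`: `d_hyp(x,y) = 2|artanh x - artanh y|`. -/
noncomputable def dHypR (x y : ℝ) : ℝ := 2 * |artanh x - artanh y|

/-- `η` is a coupling of `ν₁` and `ν₂`. -/
def IsCoupling (η : Measure (ℝ × ℝ)) (ν₁ ν₂ : Measure ℝ) : Prop :=
  η.map Prod.fst = ν₁ ∧ η.map Prod.snd = ν₂

/-- Wasserstein-1 distance with cost `d_hyp`. -/
noncomputable def W1 (ν₁ ν₂ : Measure ℝ) : ENNReal :=
  ⨅ η ∈ {η : Measure (ℝ × ℝ) | IsProbabilityMeasure η ∧ IsCoupling η ν₁ ν₂},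
    ∫⁻ p, ENNReal.ofReal (dHypR p.1 p.2) ∂η

/-- Membership in `𝒫₁(-1,1)`: a Borel probability measure concentrated on `(-1,1)`
with finite first hyperbolic moment. -/
def MemP1 (ν : Measure ℝ) : Prop :=
  IsProbabilityMeasure ν ∧ ν (Set.Ioo (-1 : ℝ) 1)ᶜ = 0 ∧
    ∫⁻ x, ENNReal.ofReal (dHypR x 0) ∂ν < ⊤

/-- The Markov operator `ℋ`: `(ℋη)_{r'} = ∑_r (π_r Q_{r,r'} / π_{r'}) (f_r)_* η_r`. -/
noncomputable def markovOp {C : Type*} [Fintype C] (π : C → ℝ) (Q : Matrix C C ℝ)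
    (f : C → ℝ → ℝ) (η : C → Measure ℝ) : C → Measure ℝ := fun r' =>
  ∑ r, ENNReal.ofReal (π r * Q r r' / π r') • (η r).map (f r)

/-- The metric `𝒲(η,ζ) = ∑_r π_r W₁(η_r, ζ_r)`. -/
noncomputable def WDist {C : Type*} [Fintype C] (π : C → ℝ)
    (η ζ : C → Measure ℝ) : ENNReal :=
  ∑ r, ENNReal.ofReal (π r) * W1 (η r) (ζ r)

/-!
The weights `P r' r = π r * Q r r' / π r'` of `ℋ` are the transition matrix of the time-reversed
chain, so `ℋ` averages the push-forwards `(f r)_* η r` along the rows of `P`. Pushing a coupling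
forward by `f r × f r` shrinks its cost by `ρ`, couplings may be averaged, and the identity
`∑ r', π r' * P r' r = π r` then gives the contraction for `𝒲`.

The fixed point is found by coupling from the past, which avoids the completeness of `𝒫₁^C`.
Drive the reversed chain by i.i.d. random maps `σ₀, σ₁, …` of `C`, where `σₙ i` has law `P i`. In
the coordinate `2 artanh x` the maps `f r` are `ρ`-Lipschitz on `ℝ`, so Banach's theorem in the
space of continuous functions on the compact space `C × (ℕ → C → C)` yields `Φ` with
`Φ (i, σ₀ σ₁ σ₂ …) = f (σ₀ i) (Φ (σ₀ i, σ₁ σ₂ …))`. Taking laws on both sides, the laws of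
`Φ (i, ·)` are fixed by `ℋ`, and they are compactly supported because `Φ` is bounded. Uniqueness
holds since `𝒲` is finite on `𝒫₁^C` and separates points: the squared Lévy–Prokhorov distance is at
most `W₁`.
-/

open scoped ENNReal NNReal

section InvariantGraph

variable {X E : Type*} [TopologicalSpace X] [CompactSpace X] [MetricSpace E] [CompleteSpace E]
  [Nonempty E] {K : ℝ≥0}

lemma exists_continuousMap_invariant_graph (hK : K < 1) {T : X → X} (hT : Continuous T)
    {G : X → E → E} (hG : Continuous (Function.uncurry G)) (hlip : ∀ x, LipschitzWith K (G x)) :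
    ∃ Φ : C(X, E), ∀ x, Φ x = G x (Φ (T x)) := by
  let 𝒯 (Φ : C(X, E)) : C(X, E) :=
    ⟨fun x ↦ G x (Φ (T x)), hG.comp (continuous_id.prodMk (Φ.continuous.comp hT))⟩
  have : Nonempty C(X, E) := ⟨.const X (Classical.arbitrary E)⟩
  have h𝒯 : ContractingWith K 𝒯 := by
    refine ⟨hK, .of_dist_le_mul fun Φ Ψ ↦ ?_⟩
    refine (ContinuousMap.dist_le (by positivity)).2 fun x ↦ ?_
    calc dist (G x (Φ (T x))) (G x (Ψ (T x))) ≤ K * dist (Φ (T x)) (Ψ (T x)) :=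
          (hlip x).dist_le_mul _ _
      _ ≤ K * dist Φ Ψ := by gcongr; exact ContinuousMap.dist_apply_le_dist _
  exact ⟨h𝒯.fixedPoint, fun x ↦ DFunLike.congr_fun h𝒯.fixedPoint_isFixedPt.eq.symm x⟩

end InvariantGraph

section Measure

variable {α β ι : Type*} [MeasurableSpace α] [MeasurableSpace β] [Fintype ι]

lemma isProbabilityMeasure_sum_smul {w : ι → ℝ≥0∞} (hw : ∑ i, w i = 1) {μ : ι → Measure α}
    (hμ : ∀ i, IsProbabilityMeasure (μ i)) : IsProbabilityMeasure (∑ i, w i • μ i) :=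
  ⟨by simp [hw]⟩

lemma map_sum_smul (w : ι → ℝ≥0∞) (μ : ι → Measure α) {f : α → β} (hf : Measurable f) :
    (∑ i, w i • μ i).map f = ∑ i, w i • (μ i).map f := by
  rw [Measure.map_finset_sum' hf.aemeasurable]
  simp_rw [Measure.map_smul]

lemma map_sum_smul_dirac_prod [MeasurableSpace ι] [DiscreteMeasurableSpace ι] (w : ι → ℝ≥0∞)
    (ℙ : Measure α) [SFinite ℙ] {F : ι → α → β} (hF : ∀ i, Measurable (F i)) :
    ((∑ i, w i • Measure.dirac i).prod ℙ).map (fun p ↦ F p.1 p.2) = ∑ i, w i • ℙ.map (F i) := by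
  have hF' : Measurable fun p : ι × α ↦ F p.1 p.2 := measurable_from_prod_countable_right hF
  ext s hs
  rw [Measure.map_apply hF' hs, Measure.prod_apply (hF' hs)]
  simp only [lintegral_finsetSum_measure, lintegral_smul_measure, lintegral_dirac,
    Measure.finsetSum_apply, Measure.smul_apply, Measure.map_apply (hF _) hs, smul_eq_mul]
  rfl

/-- The sequence `a, u 0, u 1, …`, which extends a random sequence by one earlier step. -/
def seqCons {α : Type*} (a : α) (u : ℕ → α) : ℕ → α
  | 0 => a
  | n + 1 => u n

lemma measurable_seqCons : Measurable fun p : α × (ℕ → α) ↦ seqCons p.1 p.2 := by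
  refine measurable_pi_lambda _ fun n ↦ ?_
  cases n with
  | zero => exact measurable_fst
  | succ n => exact (measurable_pi_apply n).comp measurable_snd

lemma map_seqCons_prod_infinitePi (κ : ℕ → Measure α) [∀ n, IsProbabilityMeasure (κ n)] :
    ((κ 0).prod (Measure.infinitePi fun n ↦ κ (n + 1))).map (fun p ↦ seqCons p.1 p.2) =
      Measure.infinitePi κ := by
  classical
  refine Measure.eq_infinitePi κ fun s t ht ↦ ?_
  let u (n : ℕ) : Set α := if n ∈ s then t n else Set.univ
  have hu (n : ℕ) : MeasurableSet (u n) := by unfold u; split_ifs <;> simp [ht]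
  obtain ⟨N, hN⟩ := s.exists_nat_subset_range
  have hsub : s ⊆ Finset.range (N + 1) := hN.trans (Finset.range_mono N.le_succ)
  have hpi : (s : Set ℕ).pi t = (Finset.range (N + 1) : Set ℕ).pi u := by
    ext x
    have : ∀ n ∈ s, n < N + 1 := fun n hn ↦ Finset.mem_range.1 (hsub hn)
    simp only [Set.mem_pi, Finset.mem_coe, Finset.mem_range, u]
    grind
  have hpre : (fun p : α × (ℕ → α) ↦ seqCons p.1 p.2) ⁻¹' (Finset.range (N + 1) : Set ℕ).pi u =
      u 0 ×ˢ (Finset.range N : Set ℕ).pi fun n ↦ u (n + 1) := by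
    ext p
    simp only [Set.mem_preimage, Set.mem_pi, Set.mem_prod, Finset.mem_coe, Finset.mem_range,
      Nat.forall_lt_succ_left, seqCons]
  rw [hpi, Measure.map_apply measurable_seqCons (.pi (Finset.countable_toSet _) fun n _ ↦ hu n),
    hpre, Measure.prod_prod, Measure.infinitePi_pi _ fun n _ ↦ hu _, mul_comm,
    ← Finset.prod_range_succ' fun n ↦ κ n (u n)]
  calc ∏ n ∈ Finset.range (N + 1), κ n (u n) = ∏ n ∈ s, κ n (u n) :=
        (Finset.prod_subset hsub fun n _ hn ↦ by simp [u, hn]).symm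
    _ = ∏ n ∈ s, κ n (t n) := Finset.prod_congr rfl fun n hn ↦ by simp [u, hn]

end Measure

section RandomIteration

variable {C E : Type*} [MetricSpace E] [CompleteSpace E] [Nonempty E] {K : ℝ≥0}

lemma exists_continuousMap_apply_seqCons [Finite C] [TopologicalSpace C] [DiscreteTopology C]
    (hK : K < 1) {g : C → E → E} (hg : ∀ j, LipschitzWith K (g j)) :
    ∃ Φ : C(C × (ℕ → C → C), E), ∀ i σ ω, Φ (i, seqCons σ ω) = g (σ i) (Φ (σ i, ω)) := by
  have happly : Continuous fun x : C × (ℕ → C → C) ↦ x.2 0 x.1 :=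
    continuous_prod_of_discrete_left.2 fun i ↦
      (continuous_apply i).comp (continuous_apply (A := fun _ : ℕ ↦ C → C) 0)
  have hg' : Continuous fun p : C × E ↦ g p.1 p.2 :=
    continuous_prod_of_discrete_left.2 fun j ↦ (hg j).continuous
  obtain ⟨Φ, hΦ⟩ := exists_continuousMap_invariant_graph hK
    (T := fun x : C × (ℕ → C → C) ↦ (x.2 0 x.1, fun n ↦ x.2 (n + 1))) (by fun_prop)
    (G := fun x ↦ g (x.2 0 x.1)) (hg'.comp (happly.prodMap continuous_id)) fun x ↦ hg _
  exact ⟨Φ, fun i σ ω ↦ hΦ (i, seqCons σ ω)⟩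

variable [Fintype C]

/-- The law of a random map `σ : C → C` whose values `σ i` are independent, each distributed
according to the row `P i` of the transition matrix `P`. -/
noncomputable def randomMapLaw [MeasurableSpace C] (P : C → C → ℝ≥0∞) : Measure (C → C) :=
  Measure.pi fun i ↦ ∑ j, P i j • Measure.dirac j

lemma isProbabilityMeasure_randomMapLaw [MeasurableSpace C] {P : C → C → ℝ≥0∞}
    (hP : ∀ i, ∑ j, P i j = 1) : IsProbabilityMeasure (randomMapLaw P) := by
  have (i : C) : IsProbabilityMeasure (∑ j, P i j • Measure.dirac j) :=
    isProbabilityMeasure_sum_smul (hP i) fun _ ↦ inferInstance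
  unfold randomMapLaw
  infer_instance

lemma map_randomMapLaw_prod [MeasurableSpace C] [DiscreteMeasurableSpace C] {P : C → C → ℝ≥0∞}
    (hP : ∀ i, ∑ j, P i j = 1) {Ω β : Type*} [MeasurableSpace Ω] [MeasurableSpace β]
    (ℙ : Measure Ω) [SFinite ℙ] {F : C → Ω → β} (hF : ∀ j, Measurable (F j)) (i : C) :
    ((randomMapLaw P).prod ℙ).map (fun p ↦ F (p.1 i) p.2) = ∑ j, P i j • ℙ.map (F j) := by
  have (i : C) : IsProbabilityMeasure (∑ j, P i j • Measure.dirac j) :=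
    isProbabilityMeasure_sum_smul (hP i) fun _ ↦ inferInstance
  have heval : MeasurePreserving (Prod.map (Function.eval i) id) ((randomMapLaw P).prod ℙ)
      ((∑ j, P i j • Measure.dirac j).prod ℙ) :=
    (measurePreserving_eval (fun i ↦ ∑ j, P i j • Measure.dirac j) i).prod (.id ℙ)
  have hF' : Measurable fun p : C × Ω ↦ F p.1 p.2 := measurable_from_prod_countable_right hF
  rw [← map_sum_smul_dirac_prod _ _ hF, ← heval.map_eq, Measure.map_map hF' heval.measurable]
  rfl

lemma exists_compactly_supported_stationary_family [MeasurableSpace E] [BorelSpace E] (hK : K < 1)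
    {P : C → C → ℝ≥0∞} (hP : ∀ i, ∑ j, P i j = 1) {g : C → E → E}
    (hg : ∀ j, LipschitzWith K (g j)) :
    ∃ (s : Set E) (μ : C → Measure E), IsCompact s ∧ (∀ i, IsProbabilityMeasure (μ i)) ∧
      (∀ i, ∀ᵐ x ∂μ i, x ∈ s) ∧ ∀ i, μ i = ∑ j, P i j • (μ j).map (g j) := by
  let : TopologicalSpace C := ⊥
  have : DiscreteTopology C := ⟨rfl⟩
  let : MeasurableSpace C := ⊤
  have := isProbabilityMeasure_randomMapLaw hP
  let ℙ : Measure (ℕ → C → C) := Measure.infinitePi fun _ ↦ randomMapLaw P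
  have hℙ : ((randomMapLaw P).prod ℙ).map (fun p ↦ seqCons p.1 p.2) = ℙ :=
    map_seqCons_prod_infinitePi fun _ ↦ randomMapLaw P
  obtain ⟨Φ, hΦ⟩ := exists_continuousMap_apply_seqCons hK hg
  have hΦm (i : C) : Measurable fun ω ↦ Φ (i, ω) := (by fun_prop : Continuous _).measurable
  have hgm (j : C) : Measurable (g j) := (hg j).continuous.measurable
  have hrange : IsCompact (Set.range Φ) := isCompact_range Φ.continuous
  refine ⟨Set.range Φ, fun i ↦ ℙ.map fun ω ↦ Φ (i, ω), hrange,
    fun i ↦ Measure.isProbabilityMeasure_map (hΦm i).aemeasurable,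
    fun i ↦ (ae_map_iff (hΦm i).aemeasurable hrange.measurableSet).2
      (ae_of_all _ fun ω ↦ Set.mem_range_self _), fun i ↦ ?_⟩
  calc ℙ.map (fun ω ↦ Φ (i, ω))
      = ((randomMapLaw P).prod ℙ).map (fun p ↦ Φ (i, seqCons p.1 p.2)) := by
        conv_lhs => rw [← hℙ, Measure.map_map (hΦm i) measurable_seqCons]
        rfl
    _ = ((randomMapLaw P).prod ℙ).map (fun p ↦ g (p.1 i) (Φ (p.1 i, p.2))) := by
        simp_rw [hΦ]
    _ = ∑ j, P i j • ℙ.map (fun ω ↦ g j (Φ (j, ω))) :=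
        map_randomMapLaw_prod hP ℙ (F := fun j ω ↦ g j (Φ (j, ω)))
          (fun j ↦ (hgm j).comp (hΦm j)) i
    _ = ∑ j, P i j • (ℙ.map fun ω ↦ Φ (j, ω)).map (g j) := by
        simp_rw [Measure.map_map (hgm _) (hΦm _)]
        rfl

end RandomIteration

section LevyProkhorov

lemma levyProkhorovEDist_map_fst_map_snd_sq_le {Ω : Type*} [PseudoEMetricSpace Ω]
    [SecondCountableTopology Ω] [MeasurableSpace Ω] [OpensMeasurableSpace Ω]
    (γ : Measure (Ω × Ω)) [IsProbabilityMeasure γ] :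
    levyProkhorovEDist (γ.map Prod.fst) (γ.map Prod.snd) ^ 2 ≤ ∫⁻ p, edist p.1 p.2 ∂γ := by
  have := Measure.isProbabilityMeasure_map (μ := γ) measurable_fst.aemeasurable
  have := Measure.isProbabilityMeasure_map (μ := γ) measurable_snd.aemeasurable
  set c := ∫⁻ p, edist p.1 p.2 ∂γ
  rw [← ENNReal.rpow_two, ← ENNReal.le_rpow_inv_iff two_pos]
  refine levyProkhorovEDist_le_of_forall_le _ _ _ fun ε B hcε hε_top hB ↦ ?_
  have hε0 : ε ≠ 0 := (zero_le.trans_lt hcε).ne'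
  rw [ENNReal.rpow_inv_lt_iff two_pos, ENNReal.rpow_two, sq] at hcε
  rw [Measure.map_apply measurable_fst hB,
    Measure.map_apply measurable_snd Metric.isOpen_thickening.measurableSet]
  calc γ (Prod.fst ⁻¹' B)
      ≤ γ (Prod.snd ⁻¹' Metric.thickening ε.toReal B ∪ {p | ε ≤ edist p.1 p.2}) :=
        measure_mono fun p hp ↦ or_iff_not_imp_right.2 fun hlt ↦ by
          rw [Set.mem_ofPred_eq, not_le, edist_comm] at hlt
          exact (Metric.mem_thickening_iff_exists_edist_lt _ _).2
            ⟨p.1, hp, hlt.trans_eq (ENNReal.ofReal_toReal hε_top.ne).symm⟩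
    _ ≤ γ (Prod.snd ⁻¹' Metric.thickening ε.toReal B) + c / ε :=
        (measure_union_le _ _).trans <| by
          gcongr
          exact meas_ge_le_lintegral_div (by fun_prop) hε0 hε_top.ne
    _ ≤ γ (Prod.snd ⁻¹' Metric.thickening ε.toReal B) + ε := by
        gcongr
        exact ENNReal.div_le_of_le_mul hcε.le

lemma eq_of_levyProkhorovEDist_eq_zero {Ω : Type*} [PseudoEMetricSpace Ω] [MeasurableSpace Ω]
    [BorelSpace Ω] {μ ν : Measure Ω} [IsProbabilityMeasure μ] [IsProbabilityMeasure ν]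
    (h : levyProkhorovEDist μ ν = 0) : μ = ν := by
  refine ext_of_generate_finite _ ?_ isPiSystem_isClosed (fun A hA ↦ ?_) (by simp)
  · rw [BorelSpace.measurable_eq (α := Ω), borel_eq_generateFrom_isClosed]
  · exact measure_eq_measure_of_levyProkhorovEDist_eq_zero_of_isClosed h hA
      ⟨1, Real.zero_lt_one, measure_ne_top _ _⟩ ⟨1, Real.zero_lt_one, measure_ne_top _ _⟩

end LevyProkhorov

section HyperbolicCoordinate

/-- The isometry `x ↦ 2 artanh x` of `((-1,1), d_hyp)` onto `ℝ`; it transports hyperbolic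
statements to the real line. -/
noncomputable def hypCoord (x : ℝ) : ℝ := 2 * artanh x

/-- The inverse `y ↦ tanh (y / 2)` of the isometry `hypCoord`, with values in `(-1,1)`. -/
noncomputable def hypInv (y : ℝ) : ℝ := Real.tanh (y / 2)

lemma dHypR_eq_dist (x y : ℝ) : dHypR x y = dist (hypCoord x) (hypCoord y) := by
  rw [dHypR, Real.dist_eq, hypCoord, hypCoord, ← mul_sub, abs_mul, abs_two]

lemma ofReal_dHypR (x y : ℝ) :
    ENNReal.ofReal (dHypR x y) = edist (hypCoord x) (hypCoord y) := by
  rw [dHypR_eq_dist, edist_dist]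

lemma hypCoord_zero : hypCoord 0 = 0 := by simp [hypCoord, artanh]

lemma ofReal_dHypR_zero (x : ℝ) : ENNReal.ofReal (dHypR x 0) = ‖hypCoord x‖ₑ := by
  rw [ofReal_dHypR, hypCoord_zero, edist_zero_right]

lemma artanh_eq_real_artanh {x : ℝ} (hx : x ∈ Set.Ioo (-1 : ℝ) 1) : artanh x = Real.artanh x :=
  (Real.artanh_eq_half_log (Set.Ioo_subset_Icc_self hx)).symm

@[fun_prop]
lemma measurable_hypCoord : Measurable hypCoord := by
  unfold hypCoord artanh
  fun_prop

@[fun_prop]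
lemma continuous_hypInv : Continuous hypInv := by
  unfold hypInv
  simp_rw [Real.tanh_eq_sinh_div_cosh]
  exact (by fun_prop : Continuous _).div (by fun_prop) fun y ↦ (Real.cosh_pos _).ne'

@[fun_prop]
lemma measurable_hypInv : Measurable hypInv := continuous_hypInv.measurable

lemma hypInv_mem (y : ℝ) : hypInv y ∈ Set.Ioo (-1 : ℝ) 1 :=
  Real.tanh_bijOn.mapsTo (Set.mem_univ _)

lemma hypCoord_hypInv (y : ℝ) : hypCoord (hypInv y) = y := by
  rw [hypCoord, artanh_eq_real_artanh (hypInv_mem y), hypInv, Real.artanh_tanh]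
  ring

lemma hypInv_hypCoord {x : ℝ} (hx : x ∈ Set.Ioo (-1 : ℝ) 1) : hypInv (hypCoord x) = x := by
  rw [hypCoord, artanh_eq_real_artanh hx, hypInv, mul_div_cancel_left₀ _ two_ne_zero,
    Real.tanh_artanh hx]

end HyperbolicCoordinate

/-- The Borel maps of `(-1,1)` into itself that are `ρ`-Lipschitz for `d_hyp`, extended to
Borel maps of `ℝ` in an arbitrary way. -/
structure IsHypLipschitz (ρ : ℝ) (f : ℝ → ℝ) : Prop where
  measurable : Measurable f
  mapsTo : Set.MapsTo f (Set.Ioo (-1) 1) (Set.Ioo (-1) 1)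
  dHypR_le : ∀ x ∈ Set.Ioo (-1 : ℝ) 1, ∀ y ∈ Set.Ioo (-1 : ℝ) 1,
    dHypR (f x) (f y) ≤ ρ * dHypR x y

namespace IsHypLipschitz

variable {ρ : ℝ} {f : ℝ → ℝ}

lemma edist_hypCoord_le (hf : IsHypLipschitz ρ f) {x y : ℝ} (hx : x ∈ Set.Ioo (-1 : ℝ) 1)
    (hy : y ∈ Set.Ioo (-1 : ℝ) 1) : edist (hypCoord (f x)) (hypCoord (f y)) ≤
      ENNReal.ofReal ρ * edist (hypCoord x) (hypCoord y) := by
  rw [← ofReal_dHypR, ← ofReal_dHypR, ← ENNReal.ofReal_mul' (by rw [dHypR]; positivity)]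
  exact ENNReal.ofReal_le_ofReal (hf.dHypR_le x hx y hy)

lemma lipschitzWith_conj (hf : IsHypLipschitz ρ f) :
    LipschitzWith ρ.toNNReal fun y ↦ hypCoord (f (hypInv y)) := fun x y ↦ by
  have h := hf.edist_hypCoord_le (hypInv_mem x) (hypInv_mem y)
  rwa [hypCoord_hypInv, hypCoord_hypInv] at h

lemma hypInv_conj (hf : IsHypLipschitz ρ f) (y : ℝ) :
    hypInv (hypCoord (f (hypInv y))) = f (hypInv y) :=
  hypInv_hypCoord (hf.mapsTo (hypInv_mem y))

end IsHypLipschitz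

namespace MemP1

variable {ν ν₁ ν₂ : Measure ℝ}

lemma ae_mem (h : MemP1 ν) : ∀ᵐ x ∂ν, x ∈ Set.Ioo (-1 : ℝ) 1 := mem_ae_iff.2 h.2.1

lemma lintegral_hypCoord_lt_top (h : MemP1 ν) : ∫⁻ x, ‖hypCoord x‖ₑ ∂ν < ⊤ := by
  simpa only [ofReal_dHypR_zero] using h.2.2

lemma map_hypInv_hypCoord (h : MemP1 ν) : (ν.map hypCoord).map hypInv = ν := by
  rw [Measure.map_map (by fun_prop) (by fun_prop)]
  conv_rhs => rw [← Measure.map_id (μ := ν)]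
  exact Measure.map_congr (h.ae_mem.mono fun x hx ↦ hypInv_hypCoord hx)

lemma eq_of_map_hypCoord_eq (h₁ : MemP1 ν₁) (h₂ : MemP1 ν₂)
    (h : ν₁.map hypCoord = ν₂.map hypCoord) : ν₁ = ν₂ := by
  rw [← h₁.map_hypInv_hypCoord, h, h₂.map_hypInv_hypCoord]

lemma map {ρ : ℝ} {f : ℝ → ℝ} (hν : MemP1 ν) (hf : IsHypLipschitz ρ f) : MemP1 (ν.map f) := by
  have := hν.1
  have hfm := hf.measurable
  refine ⟨Measure.isProbabilityMeasure_map hfm.aemeasurable, ?_, ?_⟩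
  · rw [← mem_ae_iff, mem_ae_map_iff hfm.aemeasurable measurableSet_Ioo]
    exact hν.ae_mem.mono hf.mapsTo
  simp_rw [ofReal_dHypR_zero]
  rw [lintegral_map (by fun_prop) hfm]
  calc ∫⁻ x, ‖hypCoord (f x)‖ₑ ∂ν
      ≤ ∫⁻ x, (ENNReal.ofReal ρ * ‖hypCoord x‖ₑ + ‖hypCoord (f 0)‖ₑ) ∂ν := by
        refine lintegral_mono_ae (hν.ae_mem.mono fun x hx ↦ ?_)
        have h := hf.edist_hypCoord_le hx (y := 0) (by simp)
        rw [hypCoord_zero, edist_zero_right] at h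
        rw [← edist_zero_right, ← edist_zero_right (hypCoord (f 0))]
        exact (edist_triangle _ _ _).trans (by gcongr)
    _ = ENNReal.ofReal ρ * ∫⁻ x, ‖hypCoord x‖ₑ ∂ν + ‖hypCoord (f 0)‖ₑ := by
        rw [lintegral_add_right _ measurable_const, lintegral_const_mul _ (by fun_prop)]
        simp
    _ < ⊤ := ENNReal.add_lt_top.2 ⟨ENNReal.mul_lt_top ENNReal.ofReal_lt_top
        hν.lintegral_hypCoord_lt_top, enorm_lt_top⟩

lemma sum_smul {ι : Type*} [Fintype ι] {w : ι → ℝ≥0∞} (hw : ∑ i, w i = 1)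
    {ν : ι → Measure ℝ} (hν : ∀ i, MemP1 (ν i)) : MemP1 (∑ i, w i • ν i) := by
  refine ⟨isProbabilityMeasure_sum_smul hw fun i ↦ (hν i).1, ?_, ?_⟩
  · simp [fun i ↦ (hν i).2.1]
  · simp only [lintegral_finsetSum_measure, lintegral_smul_measure, smul_eq_mul]
    refine ENNReal.sum_lt_top.2 fun i hi ↦ ENNReal.mul_lt_top ?_ (hν i).2.2
    calc w i ≤ ∑ i, w i := Finset.single_le_sum (fun _ _ ↦ zero_le) hi
      _ < ⊤ := hw ▸ ENNReal.one_lt_top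

end MemP1

lemma memP1_map_hypInv {μ : Measure ℝ} [IsProbabilityMeasure μ] (hμ : HasFiniteIntegral id μ) :
    MemP1 (μ.map hypInv) := by
  refine ⟨Measure.isProbabilityMeasure_map (by fun_prop), ?_, ?_⟩
  · rw [← mem_ae_iff, mem_ae_map_iff (by fun_prop) measurableSet_Ioo]
    exact ae_of_all _ hypInv_mem
  · simp_rw [ofReal_dHypR_zero]
    rw [lintegral_map (by fun_prop) (by fun_prop)]
    simp_rw [hypCoord_hypInv]
    exact hμ

namespace IsCoupling

variable {γ : Measure (ℝ × ℝ)} {ν₁ ν₂ : Measure ℝ}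

lemma ae_fst (h : IsCoupling γ ν₁ ν₂) {p : ℝ → Prop} (hp : ∀ᵐ x ∂ν₁, p x) :
    ∀ᵐ z ∂γ, p z.1 :=
  ae_of_ae_map measurable_fst.aemeasurable (h.1 ▸ hp)

lemma ae_snd (h : IsCoupling γ ν₁ ν₂) {p : ℝ → Prop} (hp : ∀ᵐ x ∂ν₂, p x) :
    ∀ᵐ z ∂γ, p z.2 :=
  ae_of_ae_map measurable_snd.aemeasurable (h.2 ▸ hp)

lemma prod (ν₁ ν₂ : Measure ℝ) [IsProbabilityMeasure ν₁] [IsProbabilityMeasure ν₂] :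
    IsCoupling (ν₁.prod ν₂) ν₁ ν₂ := by
  constructor <;> simp

lemma map (h : IsCoupling γ ν₁ ν₂) {f : ℝ → ℝ} (hf : Measurable f) :
    IsCoupling (γ.map (Prod.map f f)) (ν₁.map f) (ν₂.map f) := by
  have hff : Measurable (Prod.map f f) := hf.prodMap hf
  constructor
  · rw [← h.1, Measure.map_map measurable_fst hff, Measure.map_map hf measurable_fst]
    rfl
  · rw [← h.2, Measure.map_map measurable_snd hff, Measure.map_map hf measurable_snd]
    rfl

lemma sum_smul {ι : Type*} [Fintype ι] (w : ι → ℝ≥0∞) {γ : ι → Measure (ℝ × ℝ)}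
    {μ ν : ι → Measure ℝ} (h : ∀ i, IsCoupling (γ i) (μ i) (ν i)) :
    IsCoupling (∑ i, w i • γ i) (∑ i, w i • μ i) (∑ i, w i • ν i) := by
  constructor
  · rw [map_sum_smul _ _ measurable_fst]
    simp_rw [(h _).1]
  · rw [map_sum_smul _ _ measurable_snd]
    simp_rw [(h _).2]

end IsCoupling

section Wasserstein

variable {γ : Measure (ℝ × ℝ)} {ν₁ ν₂ : Measure ℝ}

lemma W1_le (hγ : IsProbabilityMeasure γ) (h : IsCoupling γ ν₁ ν₂) :
    W1 ν₁ ν₂ ≤ ∫⁻ p, edist (hypCoord p.1) (hypCoord p.2) ∂γ := by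
  simp only [W1, ofReal_dHypR]
  exact iInf₂_le γ ⟨hγ, h⟩

lemma le_W1 {a : ℝ≥0∞} (h : ∀ γ : Measure (ℝ × ℝ), IsProbabilityMeasure γ → IsCoupling γ ν₁ ν₂ →
    a ≤ ∫⁻ p, edist (hypCoord p.1) (hypCoord p.2) ∂γ) : a ≤ W1 ν₁ ν₂ := by
  simp only [W1, ofReal_dHypR]
  exact le_iInf₂ fun γ hγ ↦ h γ hγ.1 hγ.2

lemma exists_isCoupling_lt {a : ℝ≥0∞} (h : W1 ν₁ ν₂ < a) :
    ∃ γ : Measure (ℝ × ℝ), IsProbabilityMeasure γ ∧ IsCoupling γ ν₁ ν₂ ∧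
      ∫⁻ p, edist (hypCoord p.1) (hypCoord p.2) ∂γ < a := by
  contrapose! h
  exact le_W1 h

lemma W1_lt_top (h₁ : MemP1 ν₁) (h₂ : MemP1 ν₂) : W1 ν₁ ν₂ < ⊤ := by
  have := h₁.1
  have := h₂.1
  calc W1 ν₁ ν₂ ≤ ∫⁻ p, edist (hypCoord p.1) (hypCoord p.2) ∂(ν₁.prod ν₂) :=
        W1_le inferInstance (.prod ν₁ ν₂)
    _ ≤ ∫⁻ p, (‖hypCoord p.1‖ₑ + ‖hypCoord p.2‖ₑ) ∂(ν₁.prod ν₂) :=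
        lintegral_mono fun p ↦ by
          rw [edist_eq_enorm_sub]
          exact enorm_sub_le
    _ = ∫⁻ x, ‖hypCoord x‖ₑ ∂ν₁ + ∫⁻ x, ‖hypCoord x‖ₑ ∂ν₂ := by
        rw [lintegral_add_left (by fun_prop),
          measurePreserving_fst.lintegral_comp (f := fun x ↦ ‖hypCoord x‖ₑ) (by fun_prop),
          measurePreserving_snd.lintegral_comp (f := fun x ↦ ‖hypCoord x‖ₑ) (by fun_prop)]
    _ < ⊤ := ENNReal.add_lt_top.2 ⟨h₁.lintegral_hypCoord_lt_top, h₂.lintegral_hypCoord_lt_top⟩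

lemma W1_map_le {ρ : ℝ} (hρ0 : 0 < ρ) {f : ℝ → ℝ} (hf : IsHypLipschitz ρ f)
    (h₁ : ∀ᵐ x ∂ν₁, x ∈ Set.Ioo (-1 : ℝ) 1) (h₂ : ∀ᵐ x ∂ν₂, x ∈ Set.Ioo (-1 : ℝ) 1) :
    W1 (ν₁.map f) (ν₂.map f) ≤ ENNReal.ofReal ρ * W1 ν₁ ν₂ := by
  have hff : Measurable (Prod.map f f) := hf.measurable.prodMap hf.measurable
  rw [mul_comm, ← ENNReal.div_le_iff (by simpa using hρ0) ENNReal.ofReal_ne_top]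
  refine le_W1 fun γ hγ hc ↦ ENNReal.div_le_of_le_mul' ?_
  calc W1 (ν₁.map f) (ν₂.map f)
      ≤ ∫⁻ p, edist (hypCoord p.1) (hypCoord p.2) ∂(γ.map (Prod.map f f)) :=
        W1_le (Measure.isProbabilityMeasure_map hff.aemeasurable) (hc.map hf.measurable)
    _ = ∫⁻ p, edist (hypCoord (f p.1)) (hypCoord (f p.2)) ∂γ := lintegral_map (by fun_prop) hff
    _ ≤ ∫⁻ p, ENNReal.ofReal ρ * edist (hypCoord p.1) (hypCoord p.2) ∂γ := by
        refine lintegral_mono_ae ?_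
        filter_upwards [hc.ae_fst h₁, hc.ae_snd h₂] with p hp₁ hp₂
        exact hf.edist_hypCoord_le hp₁ hp₂
    _ = ENNReal.ofReal ρ * ∫⁻ p, edist (hypCoord p.1) (hypCoord p.2) ∂γ :=
        lintegral_const_mul _ (by fun_prop)

lemma W1_sum_smul_le {ι : Type*} [Fintype ι] {w : ι → ℝ≥0∞} (hw : ∑ i, w i = 1)
    {μ ν : ι → Measure ℝ} (h : ∀ i, W1 (μ i) (ν i) ≠ ⊤) :
    W1 (∑ i, w i • μ i) (∑ i, w i • ν i) ≤ ∑ i, w i * W1 (μ i) (ν i) := by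
  refine ENNReal.le_of_forall_pos_le_add fun ε hε _ ↦ ?_
  choose γ hγ hc hlt using fun i ↦
    exists_isCoupling_lt (ENNReal.lt_add_right (h i) (ENNReal.coe_pos.2 hε).ne')
  calc W1 (∑ i, w i • μ i) (∑ i, w i • ν i)
      ≤ ∫⁻ p, edist (hypCoord p.1) (hypCoord p.2) ∂(∑ i, w i • γ i) :=
        W1_le (isProbabilityMeasure_sum_smul hw hγ) (.sum_smul w hc)
    _ = ∑ i, w i * ∫⁻ p, edist (hypCoord p.1) (hypCoord p.2) ∂(γ i) := by
        simp only [lintegral_finsetSum_measure, lintegral_smul_measure, smul_eq_mul]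
    _ ≤ ∑ i, w i * (W1 (μ i) (ν i) + ε) := by
        gcongr with i
        exact (hlt i).le
    _ = ∑ i, w i * W1 (μ i) (ν i) + ε := by
        simp_rw [mul_add, Finset.sum_add_distrib, ← Finset.sum_mul, hw, one_mul]

lemma levyProkhorovEDist_map_hypCoord_sq_le (ν₁ ν₂ : Measure ℝ) :
    levyProkhorovEDist (ν₁.map hypCoord) (ν₂.map hypCoord) ^ 2 ≤ W1 ν₁ ν₂ := by
  refine le_W1 fun γ hγ hc ↦ ?_
  have hm : Measurable (Prod.map hypCoord hypCoord) :=
    measurable_hypCoord.prodMap measurable_hypCoord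
  have := Measure.isProbabilityMeasure_map (μ := γ) hm.aemeasurable
  have hc' := hc.map measurable_hypCoord
  calc levyProkhorovEDist (ν₁.map hypCoord) (ν₂.map hypCoord) ^ 2
      ≤ ∫⁻ p, edist p.1 p.2 ∂(γ.map (Prod.map hypCoord hypCoord)) := by
        rw [← hc'.1, ← hc'.2]
        exact levyProkhorovEDist_map_fst_map_snd_sq_le _
    _ = ∫⁻ p, edist (hypCoord p.1) (hypCoord p.2) ∂γ := lintegral_map (by fun_prop) hm

lemma eq_of_W1_eq_zero (h₁ : MemP1 ν₁) (h₂ : MemP1 ν₂) (h : W1 ν₁ ν₂ = 0) : ν₁ = ν₂ := by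
  have := h₁.1
  have := h₂.1
  have := Measure.isProbabilityMeasure_map (μ := ν₁) measurable_hypCoord.aemeasurable
  have := Measure.isProbabilityMeasure_map (μ := ν₂) measurable_hypCoord.aemeasurable
  have hLP := levyProkhorovEDist_map_hypCoord_sq_le ν₁ ν₂
  rw [h, nonpos_iff_eq_zero, sq_eq_zero_iff] at hLP
  exact h₁.eq_of_map_hypCoord_eq h₂ (eq_of_levyProkhorovEDist_eq_zero hLP)

end Wasserstein

section WDist

variable {C : Type*} [Fintype C] {π : C → ℝ} {η ζ : C → Measure ℝ}

lemma WDist_lt_top (hη : ∀ r, MemP1 (η r)) (hζ : ∀ r, MemP1 (ζ r)) : WDist π η ζ < ⊤ :=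
  ENNReal.sum_lt_top.2 fun r _ ↦
    ENNReal.mul_lt_top ENNReal.ofReal_lt_top (W1_lt_top (hη r) (hζ r))

lemma eq_of_WDist_eq_zero (hπpos : ∀ r, 0 < π r) (hη : ∀ r, MemP1 (η r))
    (hζ : ∀ r, MemP1 (ζ r)) (h : WDist π η ζ = 0) : η = ζ := by
  funext r
  rw [WDist, Finset.sum_eq_zero_iff] at h
  have := (mul_eq_zero.1 (h r (Finset.mem_univ r))).resolve_left (by simpa using hπpos r)
  exact eq_of_W1_eq_zero (hη r) (hζ r) this

lemma eq_of_WDist_le_mul (hπpos : ∀ r, 0 < π r) {ρ : ℝ} (hρ1 : ρ < 1) (hη : ∀ r, MemP1 (η r))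
    (hζ : ∀ r, MemP1 (ζ r)) (h : WDist π η ζ ≤ ENNReal.ofReal ρ * WDist π η ζ) : η = ζ := by
  refine eq_of_WDist_eq_zero hπpos hη hζ (by_contra fun h0 ↦ h.not_gt ?_)
  calc ENNReal.ofReal ρ * WDist π η ζ < 1 * WDist π η ζ :=
        ENNReal.mul_lt_mul_left h0 (WDist_lt_top hη hζ).ne (by simpa using hρ1)
    _ = WDist π η ζ := one_mul _

end WDist

section MarkovOperator

variable {C : Type*} {Q : Matrix C C ℝ} {π : C → ℝ} {f : C → ℝ → ℝ} {ρ : ℝ}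

/-- The transition probabilities, from `r'` to `r`, of the time reversal of the stationary chain
`(π, Q)`; they are the weights of the Markov operator `ℋ`. -/
noncomputable def reversedTransition (π : C → ℝ) (Q : Matrix C C ℝ) (r' r : C) : ℝ≥0∞ :=
  ENNReal.ofReal (π r * Q r r' / π r')

variable [Fintype C]

lemma sum_reversedTransition (hQnn : ∀ r r', 0 ≤ Q r r') (hπpos : ∀ r, 0 < π r)
    (hπstat : ∀ r', ∑ r, π r * Q r r' = π r') (r' : C) :
    ∑ r, reversedTransition π Q r' r = 1 := by
  simp only [reversedTransition]
  rw [← ENNReal.ofReal_sum_of_nonneg fun r _ ↦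
    div_nonneg (mul_nonneg (hπpos r).le (hQnn r r')) (hπpos r').le, ← Finset.sum_div, hπstat,
    div_self (hπpos r').ne', ENNReal.ofReal_one]

lemma sum_mul_reversedTransition (hQnn : ∀ r r', 0 ≤ Q r r') (hQrow : ∀ r, ∑ r', Q r r' = 1)
    (hπpos : ∀ r, 0 < π r) (r : C) :
    ∑ r', ENNReal.ofReal (π r') * reversedTransition π Q r' r = ENNReal.ofReal (π r) := by
  calc ∑ r', ENNReal.ofReal (π r') * reversedTransition π Q r' r
      = ∑ r', ENNReal.ofReal (π r * Q r r') := by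
        refine Finset.sum_congr rfl fun r' _ ↦ ?_
        rw [reversedTransition, ← ENNReal.ofReal_mul (hπpos r').le,
          mul_div_cancel₀ _ (hπpos r').ne']
    _ = ENNReal.ofReal (π r) := by
        rw [← ENNReal.ofReal_sum_of_nonneg fun r' _ ↦ mul_nonneg (hπpos r).le (hQnn r r'),
          ← Finset.mul_sum, hQrow, mul_one]

lemma memP1_markovOp (hQnn : ∀ r r', 0 ≤ Q r r') (hπpos : ∀ r, 0 < π r)
    (hπstat : ∀ r', ∑ r, π r * Q r r' = π r') (hf : ∀ r, IsHypLipschitz ρ (f r))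
    {η : C → Measure ℝ} (hη : ∀ r, MemP1 (η r)) (r' : C) : MemP1 (markovOp π Q f η r') :=
  .sum_smul (sum_reversedTransition hQnn hπpos hπstat r') fun r ↦ (hη r).map (hf r)

lemma WDist_markovOp_le (hQnn : ∀ r r', 0 ≤ Q r r') (hQrow : ∀ r, ∑ r', Q r r' = 1)
    (hπpos : ∀ r, 0 < π r) (hπstat : ∀ r', ∑ r, π r * Q r r' = π r') (hρ0 : 0 < ρ)
    (hf : ∀ r, IsHypLipschitz ρ (f r)) {η ζ : C → Measure ℝ} (hη : ∀ r, MemP1 (η r))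
    (hζ : ∀ r, MemP1 (ζ r)) :
    WDist π (markovOp π Q f η) (markovOp π Q f ζ) ≤ ENNReal.ofReal ρ * WDist π η ζ := by
  have hP := sum_reversedTransition hQnn hπpos hπstat
  calc WDist π (markovOp π Q f η) (markovOp π Q f ζ)
      ≤ ∑ r', ENNReal.ofReal (π r') * ∑ r, reversedTransition π Q r' r *
          W1 ((η r).map (f r)) ((ζ r).map (f r)) := by
        unfold WDist
        gcongr with r'
        exact W1_sum_smul_le (hP r') fun r ↦
          (W1_lt_top ((hη r).map (hf r)) ((hζ r).map (hf r))).ne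
    _ = ∑ r, (∑ r', ENNReal.ofReal (π r') * reversedTransition π Q r' r) *
          W1 ((η r).map (f r)) ((ζ r).map (f r)) := by
        simp_rw [Finset.mul_sum, Finset.sum_mul, mul_assoc]
        exact Finset.sum_comm
    _ = ∑ r, ENNReal.ofReal (π r) * W1 ((η r).map (f r)) ((ζ r).map (f r)) := by
        simp_rw [sum_mul_reversedTransition hQnn hQrow hπpos]
    _ ≤ ∑ r, ENNReal.ofReal (π r) * (ENNReal.ofReal ρ * W1 (η r) (ζ r)) := by
        gcongr with r
        exact W1_map_le hρ0 (hf r) (hη r).ae_mem (hζ r).ae_mem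
    _ = ENNReal.ofReal ρ * WDist π η ζ := by
        simp_rw [WDist, Finset.mul_sum, mul_left_comm]

lemma exists_markovOp_eq (hQnn : ∀ r r', 0 ≤ Q r r') (hπpos : ∀ r, 0 < π r)
    (hπstat : ∀ r', ∑ r, π r * Q r r' = π r') (hρ1 : ρ < 1) (hf : ∀ r, IsHypLipschitz ρ (f r)) :
    ∃ η : C → Measure ℝ, (∀ r, MemP1 (η r)) ∧ markovOp π Q f η = η := by
  have hfm (r : C) : Measurable (f r) := (hf r).measurable
  obtain ⟨s, μ, hs, hμ, hμs, hstat⟩ := exists_compactly_supported_stationary_family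
    (Real.toNNReal_lt_one.2 hρ1) (sum_reversedTransition hQnn hπpos hπstat)
    fun r ↦ (hf r).lipschitzWith_conj
  obtain ⟨B, hB⟩ := hs.isBounded.exists_norm_le
  refine ⟨fun r ↦ (μ r).map hypInv, fun r ↦ memP1_map_hypInv
    (.of_bounded ((hμs r).mono hB)), funext fun r' ↦ ?_⟩
  calc markovOp π Q f (fun r ↦ (μ r).map hypInv) r'
      = ∑ r, reversedTransition π Q r' r • ((μ r).map hypInv).map (f r) := rfl
    _ = ∑ r, reversedTransition π Q r' r •
          ((μ r).map fun y ↦ hypCoord (f r (hypInv y))).map hypInv := by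
        refine Finset.sum_congr rfl fun r _ ↦ ?_
        rw [Measure.map_map (hfm r) (by fun_prop), Measure.map_map (by fun_prop) (by fun_prop)]
        congr 2 with y
        exact ((hf r).hypInv_conj y).symm
    _ = (μ r').map hypInv := by
        conv_rhs => rw [hstat r', map_sum_smul _ _ measurable_hypInv]

theorem markov_operator_contraction_and_fixed_point_general
    (hQnn : ∀ r r', 0 ≤ Q r r') (hQrow : ∀ r, ∑ r', Q r r' = 1)
    (hπpos : ∀ r, 0 < π r) (hπstat : ∀ r', ∑ r, π r * Q r r' = π r')
    (hρ0 : 0 < ρ) (hρ1 : ρ < 1) (hf : ∀ r, IsHypLipschitz ρ (f r)) :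
    (∀ η, (∀ r, MemP1 (η r)) → ∀ r', MemP1 (markovOp π Q f η r')) ∧
    (∀ η ζ, (∀ r, MemP1 (η r)) → (∀ r, MemP1 (ζ r)) →
      WDist π (markovOp π Q f η) (markovOp π Q f ζ) ≤ ENNReal.ofReal ρ * WDist π η ζ) ∧
    (∃! η : C → Measure ℝ, (∀ r, MemP1 (η r)) ∧ markovOp π Q f η = η) := by
  refine ⟨fun η ↦ memP1_markovOp hQnn hπpos hπstat hf,
    fun η ζ ↦ WDist_markovOp_le hQnn hQrow hπpos hπstat hρ0 hf, ?_⟩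
  obtain ⟨η, hη, hfix⟩ := exists_markovOp_eq hQnn hπpos hπstat hρ1 hf
  refine ⟨η, ⟨hη, hfix⟩, fun ζ ⟨hζ, hζfix⟩ ↦ eq_of_WDist_le_mul hπpos hρ1 hζ hη ?_⟩
  simpa only [hζfix, hfix] using WDist_markovOp_le hQnn hQrow hπpos hπstat hρ0 hf hζ hη

end MarkovOperator

/-- For an irreducible row-stochastic matrix `Q` with stationary vector
`π`, and `ρ`-contracting (for the hyperbolic metric) maps `f_r` of `(-1,1)`, the Markov
operator `ℋ` maps `𝒫₁^C` into itself, is a `ρ`-contraction for `𝒲`, and has a unique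
fixed point in `𝒫₁^C`. -/
theorem markov_operator_contraction_and_fixed_point
    {C : Type*} [Fintype C] [DecidableEq C] [Nonempty C]
    (Q : Matrix C C ℝ)
    (hQnn : ∀ r r', 0 ≤ Q r r') (hQrow : ∀ r, ∑ r', Q r r' = 1)
    (hQirr : ∀ r r', ∃ n, 0 < n ∧ 0 < (Q ^ n) r r')
    (π : C → ℝ) (hπpos : ∀ r, 0 < π r) (hπsum : ∑ r, π r = 1)
    (hπstat : ∀ r', ∑ r, π r * Q r r' = π r')
    (ρ : ℝ) (hρ0 : 0 < ρ) (hρ1 : ρ < 1)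
    (f : C → ℝ → ℝ) (hfmeas : ∀ r, Measurable (f r))
    (hfmap : ∀ r, ∀ x ∈ Set.Ioo (-1 : ℝ) 1, f r x ∈ Set.Ioo (-1 : ℝ) 1)
    (hflip : ∀ r, ∀ x ∈ Set.Ioo (-1 : ℝ) 1, ∀ y ∈ Set.Ioo (-1 : ℝ) 1,
      dHypR (f r x) (f r y) ≤ ρ * dHypR x y) :
    (∀ η, (∀ r, MemP1 (η r)) → ∀ r', MemP1 (markovOp π Q f η r')) ∧
    (∀ η ζ, (∀ r, MemP1 (η r)) → (∀ r, MemP1 (ζ r)) →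
      WDist π (markovOp π Q f η) (markovOp π Q f ζ) ≤ ENNReal.ofReal ρ * WDist π η ζ) ∧
    (∃! η : C → Measure ℝ, (∀ r, MemP1 (η r)) ∧ markovOp π Q f η = η) :=
  markov_operator_contraction_and_fixed_point_general hQnn hQrow hπpos hπstat hρ0 hρ1
    fun r ↦ ⟨hfmeas r, hfmap r, hflip r⟩
end
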